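/- Let λ be a partition of r whose conjugate is μ = (μ_1, μ_2) (so λ has exactly two columns, of lengths μ_1 ≥ μ_2), and let k be a positive integer with k ≤ μ_2. Then M^λ / GR^λ(k) ≅ S^λ as 𝔖_r-modules if and only if μ_1 > k, or μ_1 = μ_2 = k = 1. -/

import Mathlib

set_option synthInstance.maxHeartbeats 1000000
set_option maxSynthPendingDepth 3
set_option maxHeartbeats 1000000

noncomputable section

namespace Specht

variable (K : Type) [Field K] [CharZero K]
variable {L : ℕ} (μ : Fin L → ℕ) (r : ℕ)

/-- The cells of the Young diagram of `λ`, where `μ = λ'` records the column lengths: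
`⟨c, j⟩` is the cell in column `c` and row `j` (`0`-indexed). -/
abbrev Cell : Type := Σ c : Fin L, Fin (μ c)

/-- Young tableaux of shape `λ`: bijective fillings of the diagram of `λ` by `{1, …, r}`. -/
abbrev Tab : Type := Cell μ ≃ Fin r

/-- The free vector space on the set of Young tableaux of shape `λ`. -/
abbrev FreeTab : Type := Tab μ r →₀ K

/-- The relations `T + S = 0`, for `S` obtained from `T` by a transposition of two entries
in the same column. -/
def colRel : Submodule K (FreeTab K μ r) :=
  Submodule.span K
    {x | ∃ (T : Tab μ r) (c : Fin L) (j₁ j₂ : Fin (μ c)), j₁ ≠ j₂ ∧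
      x = Finsupp.single T 1 +
        Finsupp.single ((Equiv.swap (⟨c, j₁⟩ : Cell μ) ⟨c, j₂⟩).trans T) 1}

/-- The module `M^λ` spanned by column tabloids. -/
abbrev MLam : Type := FreeTab K μ r ⧸ colRel K μ r

/-- The column tabloid of a tableau. -/
def tabloid (T : Tab μ r) : MLam K μ r :=
  Submodule.Quotient.mk (Finsupp.single T 1)

/-- `ρ` is the action of the symmetric group `𝔖_r` on `M^λ` by relabelling entries. -/
def IsTabAction (ρ : Equiv.Perm (Fin r) → (MLam K μ r →ₗ[K] MLam K μ r)) : Prop :=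
  ∀ (σ : Equiv.Perm (Fin r)) (T : Tab μ r), ρ σ (tabloid K μ r T) = tabloid K μ r (T.trans σ)

/-- The permutation of the cells exchanging the top `k` cells of column `c+1` with
the `k` cells of column `c` recorded by `A`, in increasing row order. -/
def exchPerm (c : ℕ) (hc : c + 1 < L) (k : ℕ) (hk : k ≤ μ ⟨c+1, hc⟩)
    (A : Finset (Fin (μ ⟨c, by omega⟩))) (hA : A.card = k) : Equiv.Perm (Cell μ) :=
  (List.ofFn (fun i : Fin k =>
    Equiv.swap (⟨⟨c, by omega⟩, ((A.orderIsoOfFin hA i : A) : Fin (μ ⟨c, by omega⟩))⟩ : Cell μ)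
      ⟨⟨c+1, hc⟩, ⟨i.val, by omega⟩⟩)).prod

/-- The Garnir element `g^T_{c,k} = T̄ - Σ S̄ ∈ M^λ`, the sum being over all tableaux `S`
obtained from `T` by exchanging the top `k` entries of column `c+1` with `k` entries of
column `c`, maintaining the vertical order of each exchanged set. -/
def garnirElt (T : Tab μ r) (c : ℕ) (hc : c + 1 < L) (k : ℕ) (hk : k ≤ μ ⟨c+1, hc⟩) :
    MLam K μ r :=
  tabloid K μ r T -
    ∑ A ∈ (Finset.powersetCard k (Finset.univ : Finset (Fin (μ ⟨c, by omega⟩)))).attach,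
      tabloid K μ r
        ((exchPerm μ c hc k hk A.1 (Finset.mem_powersetCard.mp A.2).2).trans T)

/-- The permutation of the cells exchanging the `k` cells of column `c+1` recorded by `B`
with the `k` cells of column `c` recorded by `A`, in increasing row order. -/
def exch2Perm (c : ℕ) (hc : c + 1 < L)  (k : ℕ)
    (A : Finset (Fin (μ ⟨c, by omega⟩))) (hA : A.card = k)
    (B : Finset (Fin (μ ⟨c+1, hc⟩))) (hB : B.card = k) : Equiv.Perm (Cell μ) :=
  (List.ofFn (fun i : Fin k =>
    Equiv.swap (⟨⟨c, by omega⟩, ((A.orderIsoOfFin hA i : A) : Fin (μ ⟨c, by omega⟩))⟩ : Cell μ)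
      ⟨⟨c+1, hc⟩, ((B.orderIsoOfFin hB i : B) : Fin (μ ⟨c+1, hc⟩))⟩)).prod

/-- The symmetrized Garnir element `r^T_{c,k} = C(μ_{c+1},k)·T̄ - Σ S̄ ∈ M^λ`, the sum being
over all tableaux `S` obtained from `T` by exchanging any `k` entries of column `c+1` with
any `k` entries of column `c`, maintaining the vertical order of each exchanged set. -/
def sgrElt (T : Tab μ r) (c : ℕ) (hc : c + 1 < L) (k : ℕ) : MLam K μ r :=
  ((μ ⟨c+1, hc⟩).choose k : K) • tabloid K μ r T -
    ∑ A ∈ (Finset.powersetCard k (Finset.univ : Finset (Fin (μ ⟨c, by omega⟩)))).attach,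
      ∑ B ∈ (Finset.powersetCard k (Finset.univ : Finset (Fin (μ ⟨c+1, hc⟩)))).attach,
        tabloid K μ r
          ((exch2Perm μ c hc k A.1 (Finset.mem_powersetCard.mp A.2).2
              B.1 (Finset.mem_powersetCard.mp B.2).2).trans T)

/-- The subspace `G^λ ⊆ M^λ` spanned by all Garnir relations. -/
def garnirSub : Submodule K (MLam K μ r) :=
  Submodule.span K
    {x | ∃ (T : Tab μ r) (c : ℕ) (hc : c + 1 < L) (k : ℕ) (hk : k ≤ μ ⟨c+1, hc⟩),
      x = garnirElt K μ r T c hc k hk}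

/-- The subspace `GR^λ(k_1, …, k_{λ_1 - 1}) ⊆ M^λ` spanned by the Garnir relations
`g^T_{c,k_c}`. -/
def grSub (kk : ℕ → ℕ) : Submodule K (MLam K μ r) :=
  Submodule.span K
    {x | ∃ (T : Tab μ r) (c : ℕ) (hc : c + 1 < L) (hk : kk c ≤ μ ⟨c+1, hc⟩),
      x = garnirElt K μ r T c hc (kk c) hk}

/-- The subspace `SGR^λ(k_1, …, k_{λ_1 - 1}) ⊆ M^λ` spanned by the symmetrized Garnir
relations `r^T_{c,k_c}`. -/
def sgrSub (kk : ℕ → ℕ) : Submodule K (MLam K μ r) :=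
  Submodule.span K
    {x | ∃ (T : Tab μ r) (c : ℕ) (hc : c + 1 < L), x = sgrElt K μ r T c hc (kk c)}

/-- Quotients `M₁ ⧸ N₁` and `M₂ ⧸ N₂` are isomorphic compatibly with the given actions. -/
def IsQuotIso {G' : Type} {M₁ M₂ : Type} [AddCommGroup M₁] [Module K M₁]
    [AddCommGroup M₂] [Module K M₂]
    (N₁ : Submodule K M₁) (N₂ : Submodule K M₂)
    (ρ₁ : G' → M₁ →ₗ[K] M₁) (ρ₂ : G' → M₂ →ₗ[K] M₂) : Prop :=
  ∃ e : (M₁ ⧸ N₁) ≃ₗ[K] (M₂ ⧸ N₂),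
    ∀ (g : G') (x : M₁) (y : M₂),
      e (Submodule.Quotient.mk x) = Submodule.Quotient.mk y →
      e (Submodule.Quotient.mk (ρ₁ g x)) = Submodule.Quotient.mk (ρ₂ g y)

end Specht

namespace Specht

section Combinatorics

open Finset

variable {K V α : Type*} [Field K] [AddCommGroup V] [Module K V] [Fintype α] [DecidableEq α]

/-- The sum of `f` over the `b`-subsets containing `Z` and disjoint from `W`. -/
def sumAvoid (f : Finset α → V) (b : ℕ) (Z W : Finset α) : V :=
  ∑ Y ∈ univ.filter (fun Y : Finset α => Y.card = b ∧ Z ⊆ Y ∧ Disjoint Y W), f Y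

theorem sumAvoid_split (f : Finset α → V) (b : ℕ) (Z W : Finset α) (x : α) :
    sumAvoid f b Z W = sumAvoid f b (insert x Z) W + sumAvoid f b Z (insert x W) := by
  unfold sumAvoid
  rw [← sum_filter_add_sum_filter_not _ (fun Y : Finset α => x ∈ Y)]
  congr 1 <;> refine sum_congr ?_ fun _ _ => rfl
  · ext Y
    simp only [mem_filter, mem_univ, true_and, insert_subset_iff]
    tauto
  · ext Y
    simp only [mem_filter, mem_univ, true_and, disjoint_insert_right]
    tauto

theorem sumAvoid_self (f : Finset α → V) {b : ℕ} {Y : Finset α} (hY : Y.card = b) :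
    sumAvoid f b Y ∅ = f Y := by
  unfold sumAvoid
  rw [sum_eq_single_of_mem Y]
  · simp [hY]
  · intro Y' hY' hne
    simp only [mem_filter, mem_univ, true_and] at hY'
    exact absurd (eq_of_subset_of_card_le hY'.2.1 (by omega)).symm hne

theorem sumAvoid_eq_neg_one_pow_smul (f : Finset α → V) (b : ℕ) (W : Finset α) :
    ∀ Z : Finset α, (∀ W' ⊂ W, sumAvoid f b (Z ∪ W') ∅ = 0) →
      sumAvoid f b Z W = (-1 : K) ^ W.card • sumAvoid f b (Z ∪ W) ∅ := by
  induction W using Finset.induction_on with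
  | empty => intro Z _; simp
  | insert x W hx ih =>
    intro Z h
    have h1 : sumAvoid f b Z W = 0 := by
      rw [ih Z fun W' hW' => h W' (hW'.trans (ssubset_insert hx)), h W (ssubset_insert hx),
        smul_zero]
    have h2 := ih (insert x Z) fun W' hW' => by
      rw [insert_union, ← union_insert]
      refine h _ ?_
      have hxW' : x ∉ W' := fun h => hx (hW'.1 h)
      refine ⟨insert_subset_insert _ hW'.1, fun hc => hW'.2 fun y hy => ?_⟩
      rcases mem_insert.1 (hc (mem_insert_of_mem hy)) with rfl | h
      · exact absurd hy hx
      · exact h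
    have h3 := sumAvoid_split f b Z W x
    rw [h1, h2] at h3
    rw [card_insert_of_notMem hx, union_insert, ← insert_union, pow_succ, mul_neg_one, neg_smul]
    exact (neg_eq_of_add_eq_zero_right h3.symm).symm

theorem sum_powersetCard_compl_eq_sumAvoid (f : Finset α → V) {b k : ℕ} {Y B : Finset α}
    (hY : Y.card = b) (hB : B ⊆ Y) (hk : B.card = k) :
    ∑ A ∈ powersetCard k Yᶜ, f ((Y \ B) ∪ A) = sumAvoid f b (Y \ B) B := by
  unfold sumAvoid
  have hc : (Y \ B).card = b - k := by rw [card_sdiff_of_subset hB, hY, hk]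
  have hkb : k ≤ b := by rw [← hY, ← hk]; exact card_le_card hB
  refine sum_bij' (fun A _ => (Y \ B) ∪ A) (fun Y' _ => Y' \ (Y \ B)) ?_ ?_ ?_ ?_ ?_
  · intro A hA
    rw [mem_powersetCard] at hA
    have hd : ∀ x ∈ A, x ∉ Y := fun x hx => by simpa using hA.1 hx
    simp only [mem_filter, mem_univ, true_and]
    refine ⟨?_, subset_union_left, ?_⟩
    · rw [card_union_of_disjoint, hc, hA.2]
      · omega
      · rw [disjoint_left]; intro x hx hx'; exact hd x hx' (mem_sdiff.1 hx).1
    · rw [disjoint_left]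
      intro x hx hxB
      rcases mem_union.1 hx with h | h
      · exact (mem_sdiff.1 h).2 hxB
      · exact hd x h (hB hxB)
  · intro Y' hY'
    simp only [mem_filter, mem_univ, true_and] at hY'
    rw [mem_powersetCard]
    refine ⟨fun x hx => ?_, ?_⟩
    · rw [mem_sdiff, mem_sdiff] at hx
      rw [mem_compl]
      intro hxY
      exact hx.2 ⟨hxY, disjoint_left.1 hY'.2.2 hx.1⟩
    · rw [card_sdiff_of_subset hY'.2.1, hY'.1, hc]; omega
  · intro A hA
    rw [mem_powersetCard] at hA
    have hd : ∀ x ∈ A, x ∉ Y := fun x hx => by simpa using hA.1 hx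
    ext x
    have := hd x
    simp only [mem_sdiff, mem_union]
    tauto
  · intro Y' hY'
    simp only [mem_filter, mem_univ, true_and] at hY'
    exact union_sdiff_of_subset hY'.2.1
  · intros; rfl

theorem card_supersets_sdiff_disjoint {a b j k : ℕ} {Z C Y' : Finset α}
    (hα : Fintype.card α = a + b) (hZ : Z.card + k = b) (hZC : Disjoint Z C)
    (hC : C.card = j) (hj : j ≤ k) (hY' : Y'.card = b) (hZY : Z ⊆ Y') (hd : Disjoint Y' C) :
    (univ.filter (fun Y : Finset α =>
      Y.card = b ∧ Z ∪ C ⊆ Y ∧ Disjoint Y' (Y \ Z))).card = (a - j).choose (k - j) := by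
  have hYC : ((Y' ∪ C)ᶜ).card = a - j := by
    rw [card_compl, card_union_of_disjoint hd, hY', hC, hα]; omega
  have hZCc : (Z ∪ C).card = Z.card + j := by rw [card_union_of_disjoint hZC, hC]
  rw [← hYC, ← card_powersetCard]
  refine card_bij' (fun Y _ => Y \ (Z ∪ C)) (fun A _ => (Z ∪ C) ∪ A) ?_ ?_ ?_ ?_
  · intro Y hY
    simp only [mem_filter, mem_univ, true_and] at hY
    rw [mem_powersetCard]
    refine ⟨fun x hx => ?_, ?_⟩
    · have : x ∈ Y \ Z → x ∉ Y' := fun h => disjoint_right.1 hY.2.2 h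
      simp only [mem_sdiff, mem_union, mem_compl] at hx this ⊢
      tauto
    · rw [card_sdiff_of_subset hY.2.1, hY.1, hZCc]; omega
  · intro A hA
    rw [mem_powersetCard] at hA
    have hA' : ∀ x ∈ A, x ∉ Y' ∧ x ∉ C := fun x hx => by simpa using hA.1 hx
    simp only [mem_filter, mem_univ, true_and]
    refine ⟨?_, subset_union_left, ?_⟩
    · rw [card_union_of_disjoint, hZCc, hA.2]
      · omega
      · rw [disjoint_right]
        intro x hx hx'
        rcases mem_union.1 hx' with h | h
        · exact (hA' x hx).1 (hZY h)
        · exact (hA' x hx).2 h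
    · rw [disjoint_right]
      intro x hx
      have h1 := hA' x
      have h2 : x ∈ C → x ∉ Y' := fun h => disjoint_right.1 hd h
      simp only [mem_sdiff, mem_union] at hx
      tauto
  · intro Y hY
    simp only [mem_filter, mem_univ, true_and] at hY
    exact union_sdiff_of_subset hY.2.1
  · intro A hA
    rw [mem_powersetCard] at hA
    ext x
    have h1 : x ∈ A → x ∉ Y' ∧ x ∉ C := fun hx => by simpa using hA.1 hx
    have h2 := @hZY x
    simp only [mem_sdiff, mem_union]
    tauto

/-- A function on `k`-subsets which is an eigenvector of the Kneser graph for the eigenvalue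
`(-1) ^ k` is harmonic, relative to a fixed set `Z`. -/
theorem sumAvoid_union_eq_zero [CharZero K] {a b k : ℕ} (f : Finset α → V)
    (hα : Fintype.card α = a + b) (hka : k < a) (Z : Finset α) (hZ : Z.card + k = b)
    (hf : ∀ Y : Finset α, Y.card = b → Z ⊆ Y →
      f Y = (-1 : K) ^ k • sumAvoid f b Z (Y \ Z)) :
    ∀ (j : ℕ) (C : Finset α), C.card = j → j < k → Disjoint Z C →
      sumAvoid f b (Z ∪ C) ∅ = 0 := by
  intro j
  induction j using Nat.strong_induction_on with
  | _ j ih =>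
    intro C hC hj hZC
    have hcount : sumAvoid f b (Z ∪ C) ∅ =
        (-1 : K) ^ k • (((a - j).choose (k - j) : ℕ) : K) • sumAvoid f b Z C := by
      have h1 : sumAvoid f b (Z ∪ C) ∅ =
          ∑ Y ∈ univ.filter (fun Y : Finset α => Y.card = b ∧ Z ∪ C ⊆ Y),
            (-1 : K) ^ k • sumAvoid f b Z (Y \ Z) := by
        unfold sumAvoid
        refine sum_congr (by simp) fun Y hY => ?_
        simp only [mem_filter, mem_univ, true_and] at hY
        exact hf Y hY.1 (subset_union_left.trans hY.2)
      rw [h1, ← smul_sum]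
      congr 1
      unfold sumAvoid
      simp only [sum_filter, smul_sum]
      simp only [← sum_filter (s := univ) (p := fun Y : Finset α => Y.card = b ∧ Z ∪ C ⊆ Y)]
      rw [sum_comm]
      refine sum_congr rfl fun Y' _ => ?_
      by_cases hY' : Y'.card = b ∧ Z ⊆ Y' ∧ Disjoint Y' C
      · rw [if_pos hY', ← card_supersets_sdiff_disjoint hα hZ hZC hC hj.le hY'.1 hY'.2.1 hY'.2.2,
          ← sum_filter, sum_const, filter_filter, Nat.cast_smul_eq_nsmul]
        congr 2
        ext Y
        simp only [mem_filter, mem_univ, true_and]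
        tauto
      · rw [if_neg hY', smul_zero]
        refine sum_eq_zero fun Y hY => if_neg fun h => hY' ⟨h.1, h.2.1, ?_⟩
        simp only [mem_filter, mem_univ, true_and] at hY
        refine h.2.2.mono_right fun x hx => mem_sdiff.2 ⟨hY.2 (mem_union_right _ hx), ?_⟩
        exact disjoint_right.1 hZC hx
    have hie := sumAvoid_eq_neg_one_pow_smul (K := K) f b C Z fun W' hW' =>
      ih W'.card (hC ▸ card_lt_card hW') W' rfl (by have := card_lt_card hW'; omega)
        (hZC.mono_right hW'.1)
    rw [hie, hC, smul_smul, smul_smul] at hcount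
    have h2 : 1 < (a - j).choose (k - j) := by
      have h4 : (k - j) + 1 ≤ a - j := by omega
      have h5 : ((k - j) + 1).choose (k - j) ≤ (a - j).choose (k - j) :=
        Nat.choose_le_choose _ h4
      rw [Nat.choose_succ_self_right] at h5
      omega
    by_contra hne
    have h6 : (1 : K) = (-1) ^ k * (((a - j).choose (k - j) : ℕ) : K) * (-1) ^ j := by
      refine smul_left_injective K hne ?_
      simpa [mul_assoc] using hcount
    have h7 : (1 : ℤ) = (-1) ^ k * (((a - j).choose (k - j) : ℕ) : ℤ) * (-1) ^ j := by
      exact_mod_cast h6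
    have h8 : ((1 : ℤ)).natAbs = (((a - j).choose (k - j) : ℕ)) := by
      conv_lhs => rw [h7]
      simp [Int.natAbs_mul, Int.natAbs_pow]
    simp at h8
    omega

theorem sumAvoid_insert_sum (f : Finset α → V) (b : ℕ) (Z : Finset α) :
    ∑ x ∈ Zᶜ, sumAvoid f b (insert x Z) ∅ = (b - Z.card) • sumAvoid f b Z ∅ := by
  unfold sumAvoid
  simp only [sum_filter, smul_sum]
  rw [sum_comm]
  refine sum_congr rfl fun Y _ => ?_
  by_cases hY : Y.card = b ∧ Z ⊆ Y ∧ Disjoint Y ∅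
  · rw [if_pos hY, ← sum_filter, sum_const]
    congr 1
    rw [← hY.1, ← card_sdiff_of_subset hY.2.1]
    congr 1
    ext x
    simp only [mem_filter, mem_compl, mem_sdiff, insert_subset_iff, disjoint_empty_right]
    tauto
  · rw [if_neg hY, smul_zero]
    refine sum_eq_zero fun x _ => if_neg fun h => hY ⟨h.1, ?_, h.2.2⟩
    exact (subset_insert _ _).trans h.2.1

/-- If `f` satisfies the (sign-twisted) Garnir relations of size `k`, with `1 ≤ k ≤ b` and
`k < a`, then it satisfies the Garnir relations of every size. -/
theorem garnir_all_of_garnir [CharZero K] {a b k : ℕ} (f : Finset α → V)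
    (hα : Fintype.card α = a + b) (hk1 : 1 ≤ k) (hkb : k ≤ b) (hka : k < a)
    (hf : ∀ Y B : Finset α, Y.card = b → B ⊆ Y → B.card = k →
      f Y = (-1 : K) ^ k • ∑ A ∈ powersetCard k Yᶜ, f ((Y \ B) ∪ A))
    (l : ℕ) (Y B : Finset α) (hY : Y.card = b) (hB : B ⊆ Y) (hl : B.card = l) :
    f Y = (-1 : K) ^ l • ∑ A ∈ powersetCard l Yᶜ, f ((Y \ B) ∪ A) := by
  have top : ∀ Z' : Finset α, Z'.card + 1 = b → sumAvoid f b Z' ∅ = 0 := by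
    intro Z' hZ'
    obtain ⟨C, hCZ, hC⟩ := exists_subset_card_eq (s := Z') (n := k - 1) (by omega)
    have hZc : (Z' \ C).card + k = b := by rw [card_sdiff_of_subset hCZ]; omega
    have := sumAvoid_union_eq_zero (K := K) f hα hka (Z' \ C) hZc (fun Y hY hZY => by
      have hc : (Y \ (Z' \ C)).card = k := by rw [card_sdiff_of_subset hZY]; omega
      have h := hf Y (Y \ (Z' \ C)) hY sdiff_subset hc
      rwa [sum_powersetCard_compl_eq_sumAvoid f hY sdiff_subset hc, Finset.sdiff_sdiff_eq_self hZY] at h)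
      (k - 1) C hC (by omega) sdiff_disjoint
    rwa [sdiff_union_of_subset hCZ] at this
  have all : ∀ (m : ℕ) (Z' : Finset α), Z'.card + 1 + m = b → sumAvoid f b Z' ∅ = 0 := by
    intro m
    induction m with
    | zero => exact fun Z' h => top Z' (by omega)
    | succ m ih =>
      intro Z' h
      have hs := sumAvoid_insert_sum f b Z'
      rw [sum_eq_zero fun x hx => ih _ (by rw [card_insert_of_notMem (mem_compl.1 hx)]; omega),
        ← Nat.cast_smul_eq_nsmul K] at hs
      refine (smul_eq_zero.1 hs.symm).resolve_left ?_
      exact Nat.cast_ne_zero.2 (by omega)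
  rw [sum_powersetCard_compl_eq_sumAvoid f hY hB hl,
    sumAvoid_eq_neg_one_pow_smul (K := K) f b B, sdiff_union_of_subset hB, sumAvoid_self f hY, hl,
    smul_smul, ← mul_pow]
  · simp
  · intro W' hW'
    have h1 := card_lt_card hW'
    have h2 : ((Y \ B) ∪ W').card = (Y \ B).card + W'.card :=
      card_union_of_disjoint (sdiff_disjoint.mono_right hW'.1)
    have h3 := card_sdiff_add_card_eq_card hB
    exact all (b - ((Y \ B) ∪ W').card - 1) _ (by omega)

end Combinatorics

section Tableaux

open Finset

theorem prod_ofFn_swap_apply {α : Type*} [DecidableEq α] :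
    ∀ (k : ℕ) (x y : Fin k → α), Function.Injective x → Function.Injective y →
      (∀ i j, x i ≠ y j) →
      (∀ i, (List.ofFn fun i => Equiv.swap (x i) (y i)).prod (y i) = x i) ∧
      ∀ z, (∀ i, z ≠ x i) → (∀ i, z ≠ y i) →
        (List.ofFn fun i => Equiv.swap (x i) (y i)).prod z = z := by
  intro k
  induction k with
  | zero => intro x y _ _ _; exact ⟨fun i => i.elim0, fun z _ _ => by simp⟩
  | succ k ih =>
    intro x y hx hy hxy
    obtain ⟨h1, h2⟩ := ih (fun i => x i.succ) (fun i => y i.succ)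
      (hx.comp (Fin.succ_injective k)) (hy.comp (Fin.succ_injective k)) fun i j => hxy _ _
    rw [List.ofFn_succ, List.prod_cons]
    refine ⟨fun i => ?_, fun z hzx hzy => ?_⟩
    · rw [Equiv.Perm.mul_apply]
      refine Fin.cases ?_ (fun i => ?_) i
      · rw [h2 _ (fun i => (hxy _ _).symm) fun i => hy.ne (Fin.succ_ne_zero i).symm,
          Equiv.swap_apply_right]
      · rw [h1, Equiv.swap_apply_of_ne_of_ne (hx.ne (Fin.succ_ne_zero i)) (hxy _ _)]
    · rw [Equiv.Perm.mul_apply, h2 z (fun i => hzx _) (fun i => hzy _),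
        Equiv.swap_apply_of_ne_of_ne (hzx 0) (hzy 0)]

variable {K : Type} [Field K] {μ : Fin 2 → ℕ} {r : ℕ}

/-- The set of entries of the second column. -/
def col2 (T : Tab μ r) : Finset (Fin r) := univ.image fun j : Fin (μ 1) => T ⟨1, j⟩

/-- The set of the top `k` entries of the second column. -/
def top2 (T : Tab μ r) (k : ℕ) : Finset (Fin r) :=
  (univ.filter fun j : Fin (μ 1) => j.val < k).image fun j => T ⟨1, j⟩

/-- The sign of a tableau relative to a reference tableau. -/
def tabSign (T₀ T : Tab μ r) : ℤˣ := Equiv.Perm.sign (T.trans T₀.symm : Equiv.Perm (Cell μ))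

theorem tabSign_trans (T₀ T : Tab μ r) (π : Equiv.Perm (Cell μ)) :
    tabSign T₀ (π.trans T) = Equiv.Perm.sign π * tabSign T₀ T := by
  unfold tabSign
  rw [mul_comm, ← Equiv.Perm.sign_mul]
  rfl

theorem mem_col2 (T : Tab μ r) (x : Cell μ) : T x ∈ col2 T ↔ x.1 = 1 := by
  simp only [col2, mem_image, mem_univ, true_and, EmbeddingLike.apply_eq_iff_eq]
  constructor
  · rintro ⟨j, rfl⟩; rfl
  · obtain ⟨c, j⟩ := x
    rintro rfl
    exact ⟨j, rfl⟩

theorem card_col2 (T : Tab μ r) : (col2 T).card = μ 1 := by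
  rw [col2, card_image_of_injective, card_univ, Fintype.card_fin]
  intro i j h
  simpa using h

theorem top2_subset (T : Tab μ r) (k : ℕ) : top2 T k ⊆ col2 T :=
  image_subset_image (filter_subset _ _)

theorem card_top2 (T : Tab μ r) {k : ℕ} (hk : k ≤ μ 1) : (top2 T k).card = k := by
  rw [top2, card_image_of_injective]
  · rw [Fin.card_filter_val_lt]; omega
  · intro i j h
    simpa using h

theorem col2_eq_of_col_preserving (T : Tab μ r) (π : Equiv.Perm (Cell μ))
    (hπ : ∀ x, (π x).1 = x.1) : col2 (π.trans T) = col2 T := by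
  ext y
  obtain ⟨x, rfl⟩ := (π.trans T).surjective y
  rw [mem_col2, Equiv.trans_apply, mem_col2, hπ]

theorem swap_col_preserving (c : Fin 2) (i j : Fin (μ c)) (x : Cell μ) :
    (Equiv.swap (⟨c, i⟩ : Cell μ) ⟨c, j⟩ x).1 = x.1 := by
  rw [Equiv.swap_apply_def]
  split_ifs with h1 h2
  · rw [h1]
  · rw [h2]
  · rfl

/-- The linear functional on `M^λ` attached to a function on the sets of entries of the
second column. -/
def colFunctional (T₀ : Tab μ r) (χ : Finset (Fin r) → K) : MLam K μ r →ₗ[K] K :=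
  (colRel K μ r).liftQ
    (Finsupp.linearCombination K fun T => ((tabSign T₀ T : ℤ) : K) * χ (col2 T)) <| by
    rw [colRel, Submodule.span_le]
    rintro _ ⟨T, c, i, j, hij, rfl⟩
    have hne : (⟨c, i⟩ : Cell μ) ≠ ⟨c, j⟩ := fun h => hij (by simpa using h)
    simp only [SetLike.mem_coe, LinearMap.mem_ker, map_add,
      Finsupp.linearCombination_single, one_smul]
    rw [col2_eq_of_col_preserving T _ (swap_col_preserving c i j), tabSign_trans,
      Equiv.Perm.sign_swap hne]
    simp

theorem colFunctional_tabloid (T₀ : Tab μ r) (χ : Finset (Fin r) → K) (T : Tab μ r) :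
    colFunctional T₀ χ (tabloid K μ r T) = ((tabSign T₀ T : ℤ) : K) * χ (col2 T) := by
  unfold colFunctional tabloid
  erw [Submodule.liftQ_apply]
  simp

theorem tabloid_swap (T : Tab μ r) (c : Fin 2) (i j : Fin (μ c)) (hij : i ≠ j) :
    tabloid K μ r ((Equiv.swap (⟨c, i⟩ : Cell μ) ⟨c, j⟩).trans T) = -tabloid K μ r T := by
  rw [eq_neg_iff_add_eq_zero, add_comm]
  unfold tabloid
  rw [← Submodule.Quotient.mk_add, Submodule.Quotient.mk_eq_zero]
  exact Submodule.subset_span ⟨T, c, i, j, hij, rfl⟩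

/-- The column tabloid of `T`, multiplied by the sign of `T`. -/
def signedTabloid (K : Type) [Field K] (T₀ T : Tab μ r) : MLam K μ r :=
  ((tabSign T₀ T : ℤ) : K) • tabloid K μ r T

theorem tabloid_eq_smul_signedTabloid (T₀ T : Tab μ r) :
    tabloid K μ r T = ((tabSign T₀ T : ℤ) : K) • signedTabloid K T₀ T := by
  rw [signedTabloid, smul_smul, ← Int.cast_mul, ← Units.val_mul, Int.units_mul_self]
  simp

theorem signedTabloid_trans (T₀ T : Tab μ r) (π : Equiv.Perm (Cell μ))
    (hπ : ∀ x, (π x).1 = x.1) : signedTabloid K T₀ (π.trans T) = signedTabloid K T₀ T := by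
  let S : Set (Equiv.Perm (Cell μ)) :=
    {σ | ∃ (c : Fin 2) (i j : Fin (μ c)), i ≠ j ∧ σ = Equiv.swap ⟨c, i⟩ ⟨c, j⟩}
  have hS : ∀ σ ∈ S, σ.IsSwap := by
    rintro _ ⟨c, i, j, hij, rfl⟩
    exact ⟨_, _, fun h => hij (by simpa using h), rfl⟩
  have hmem : π ∈ Subgroup.closure S := by
    rw [mem_closure_isSwap hS]
    refine ⟨Set.toFinite _, fun x => ?_⟩
    by_cases hx : π x = x
    · rw [hx]; exact MulAction.mem_orbit_self x
    · obtain ⟨c, i⟩ := x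
      have h1 := hπ ⟨c, i⟩
      rcases hy : π ⟨c, i⟩ with ⟨d, j⟩
      rw [hy] at h1 hx
      obtain rfl : d = c := h1
      refine ⟨⟨Equiv.swap ⟨d, i⟩ ⟨d, j⟩,
        Subgroup.subset_closure ⟨d, i, j, fun h => hx (by rw [h]), rfl⟩⟩, ?_⟩
      exact Equiv.swap_apply_left _ _
  clear hπ
  induction hmem using Subgroup.closure_induction generalizing T with
  | mem σ hσ =>
    obtain ⟨c, i, j, hij, rfl⟩ := hσ
    have hne : (⟨c, i⟩ : Cell μ) ≠ ⟨c, j⟩ := fun h => hij (by simpa using h)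
    rw [signedTabloid, signedTabloid, tabloid_swap T c i j hij, tabSign_trans,
      Equiv.Perm.sign_swap hne]
    simp
  | one => rfl
  | mul σ τ _ _ hσ hτ =>
    have : Equiv.trans (σ * τ) T = Equiv.trans τ (Equiv.trans σ T) := rfl
    rw [this, hτ, hσ]
  | inv σ _ hσ =>
    rw [← hσ (Equiv.trans σ⁻¹ T), ← Equiv.trans_assoc]
    congr 1
    ext x
    simp

theorem signedTabloid_eq_of_col2_eq (T₀ T T' : Tab μ r) (h : col2 T = col2 T') :
    signedTabloid K T₀ T = signedTabloid K T₀ T' := by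
  have hT : T = Equiv.trans (T.trans T'.symm : Equiv.Perm (Cell μ)) T' := by ext x; simp
  rw [hT]
  refine signedTabloid_trans T₀ T' _ fun x => ?_
  have h1 := mem_col2 T' ((T.trans T'.symm) x)
  rw [← h, Equiv.trans_apply, Equiv.apply_symm_apply, mem_col2] at h1
  rw [Equiv.trans_apply]
  generalize (T'.symm (T x)).1 = c at *
  generalize x.1 = d at *
  revert c d
  decide

open Classical in
/-- The signed column tabloid with a given set of entries in the second column. -/
def setTabloid (K : Type) [Field K] (T₀ : Tab μ r) (Y : Finset (Fin r)) : MLam K μ r :=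
  if h : ∃ T : Tab μ r, col2 T = Y then signedTabloid K T₀ h.choose else 0

theorem setTabloid_col2 (T₀ T : Tab μ r) :
    setTabloid K T₀ (col2 T) = signedTabloid K T₀ T := by
  have h : ∃ T' : Tab μ r, col2 T' = col2 T := ⟨T, rfl⟩
  rw [setTabloid, dif_pos h]
  exact signedTabloid_eq_of_col2_eq T₀ _ _ h.choose_spec

theorem exists_tab (hr : r = μ 0 + μ 1) {k : ℕ} (hk : k ≤ μ 1) {Y B : Finset (Fin r)}
    (hY : Y.card = μ 1) (hB : B ⊆ Y) (hBk : B.card = k) :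
    ∃ T : Tab μ r, col2 T = Y ∧ top2 T k = B := by
  obtain ⟨g, hg⟩ := Set.MapsTo.exists_equiv_extend_of_card_eq (α := Fin (μ 1)) (t := Y)
    (by simp [hY]) (s := {j | j.val < k})
    (f := fun j => if h : j.val < k then B.orderEmbOfFin hBk ⟨j, h⟩ else Y.orderEmbOfFin hY j)
    (fun j hj => by
      simp only [Set.mem_ofPred_eq] at hj
      simp only [dif_pos hj]
      exact hB (orderEmbOfFin_mem _ _ _))
    (fun i hi j hj hij => by
      simp only [Set.mem_ofPred_eq] at hi hj
      simp only [dif_pos hi, dif_pos hj, EmbeddingLike.apply_eq_iff_eq, Fin.mk.injEq] at hij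
      exact Fin.ext hij)
  have hcard : Fintype.card (Cell μ) = r := by
    rw [Fintype.card_sigma, Fin.sum_univ_two]; simp [hr]
  let e₀ : Cell μ ≃ Fin r := Fintype.equivFinOfCardEq hcard
  obtain ⟨G, hG⟩ := Set.MapsTo.exists_equiv_extend_of_card_eq (α := Cell μ)
    (t := (univ : Finset (Fin r))) (by simp [hcard]) (s := {x | x.1 = 1})
    (f := fun x => if h : x.1 = 1 then (g (h ▸ x.2) : Fin r) else e₀ x)
    (fun _ _ => by simp)
    (by
      rintro ⟨c, i⟩ hi ⟨d, j⟩ hj hij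
      simp only [Set.mem_ofPred_eq] at hi hj
      subst hi hj
      simpa using hij)
  let T : Tab μ r := G.trans (Equiv.subtypeUnivEquiv (fun x => mem_univ x))
  have hT : ∀ j : Fin (μ 1), T ⟨1, j⟩ = g j := fun j => by
    have := hG ⟨1, j⟩ rfl
    simp only [dite_true] at this
    exact this
  refine ⟨T, ?_, ?_⟩
  · refine eq_of_subset_of_card_le ?_ (by rw [card_col2, hY])
    intro y hy
    obtain ⟨j, -, rfl⟩ := mem_image.1 hy
    rw [hT]
    exact (g j).2
  · refine eq_of_subset_of_card_le ?_ (by rw [card_top2 T hk, hBk])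
    intro y hy
    obtain ⟨j, hj, rfl⟩ := mem_image.1 hy
    rw [mem_filter] at hj
    rw [hT, hg j hj.2, dif_pos hj.2]
    exact orderEmbOfFin_mem _ _ _

theorem sign_exchPerm (hc : 0 + 1 < 2) (k : ℕ) (hk : k ≤ μ ⟨0 + 1, hc⟩)
    (A : Finset (Fin (μ ⟨0, by omega⟩))) (hA : A.card = k) :
    Equiv.Perm.sign (exchPerm μ 0 hc k hk A hA) = (-1) ^ k := by
  unfold exchPerm
  rw [map_list_prod, List.map_ofFn, List.prod_ofFn]
  rw [prod_congr rfl (g := fun _ => (-1 : ℤˣ))]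
  · simp
  · intro i _
    refine Equiv.Perm.sign_swap fun h => ?_
    have := congrArg (fun x : Cell μ => x.1.val) h
    simp at this

/-- The entries of the first column. -/
def col1Emb (T : Tab μ r) : Fin (μ 0) ↪ Fin r :=
  ⟨fun j => T ⟨0, j⟩, fun i j h => by simpa using h⟩

theorem map_col1Emb_univ (T : Tab μ r) : univ.map (col1Emb T) = (col2 T)ᶜ := by
  ext y
  obtain ⟨x, rfl⟩ := T.surjective y
  rw [mem_compl, mem_col2]
  simp only [mem_map, mem_univ, true_and]
  constructor
  · rintro ⟨j, hj⟩
    rw [← T.injective hj]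
    simp
  · obtain ⟨c, j⟩ := x
    intro h
    obtain rfl : c = 0 := by
      simp only at h
      revert h
      clear j
      revert c
      decide
    exact ⟨j, rfl⟩

theorem col2_exchPerm_trans (hc : 0 + 1 < 2) (T : Tab μ r) (k : ℕ) (hk : k ≤ μ ⟨0 + 1, hc⟩)
    (A : Finset (Fin (μ ⟨0, by omega⟩))) (hA : A.card = k) :
    col2 ((exchPerm μ 0 hc k hk A hA).trans T) = (col2 T \ top2 T k) ∪ A.map (col1Emb T) := by
  obtain ⟨h1, h2⟩ := prod_ofFn_swap_apply k
    (fun i : Fin k => (⟨⟨0, by omega⟩, ((A.orderIsoOfFin hA i : A) : Fin (μ ⟨0, by omega⟩))⟩ :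
      Cell μ))
    (fun i => ⟨⟨0 + 1, hc⟩, ⟨i.val, by omega⟩⟩)
    (fun i j h => by simpa using h) (fun i j h => by simpa [Fin.ext_iff] using h)
    (fun i j h => by
      have := congrArg (fun x : Cell μ => x.1.val) h
      simp at this)
  symm
  refine eq_of_subset_of_card_le ?_ ?_
  · intro y hy
    rw [mem_union, mem_sdiff] at hy
    rcases hy with ⟨hy, hy'⟩ | hy
    · obtain ⟨j, -, rfl⟩ := mem_image.1 hy
      have hj : ¬ j.val < k := fun h => hy' (mem_image.2 ⟨j, by simpa using h, rfl⟩)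
      refine mem_image.2 ⟨j, mem_univ _, ?_⟩
      rw [Equiv.trans_apply]
      congr 1
      refine h2 _ (fun i h => ?_) (fun i h => ?_)
      · have := congrArg (fun x : Cell μ => x.1.val) h
        simp at this
      · have h3 : j = ⟨i.val, by omega⟩ := by simpa using h
        exact hj (by rw [h3]; exact i.2)
    · obtain ⟨a, ha, rfl⟩ := mem_map.1 hy
      obtain ⟨i, hi⟩ := (A.orderIsoOfFin hA).surjective ⟨a, ha⟩
      refine mem_image.2 ⟨⟨i.val, i.2.trans_le hk⟩, mem_univ _, ?_⟩
      rw [Equiv.trans_apply]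
      have h3 := h1 i
      simp only [hi] at h3
      exact congrArg T h3
  · have hd : Disjoint (col2 T \ top2 T k) (A.map (col1Emb T)) := by
      rw [disjoint_right]
      intro y hy hy'
      have : y ∈ (col2 T)ᶜ := by
        rw [← map_col1Emb_univ]
        exact map_subset_map.2 (subset_univ A) hy
      exact mem_compl.1 this (mem_sdiff.1 hy').1
    have h3 := card_sdiff_add_card_eq_card (top2_subset T k)
    rw [card_top2 T hk] at h3
    rw [card_col2] at h3 ⊢
    rw [card_union_of_disjoint hd, card_map, hA, h3]

/-- The image of a Garnir element under a linear map expressed through sets of entries of the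
second column. -/
theorem map_garnirElt {V : Type*} [AddCommGroup V] [Module K V] (T₀ : Tab μ r)
    (φ : MLam K μ r →ₗ[K] V) (f : Finset (Fin r) → V)
    (hφ : ∀ T, φ (tabloid K μ r T) = ((tabSign T₀ T : ℤ) : K) • f (col2 T))
    (T : Tab μ r) (hc : 0 + 1 < 2) (k : ℕ) (hk : k ≤ μ ⟨0 + 1, hc⟩) :
    φ (garnirElt K μ r T 0 hc k hk) = ((tabSign T₀ T : ℤ) : K) •
      (f (col2 T) - (-1 : K) ^ k •
        ∑ A ∈ powersetCard k (col2 T)ᶜ, f ((col2 T \ top2 T k) ∪ A)) := by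
  unfold garnirElt
  rw [map_sub, map_sum, hφ, smul_sub]
  congr 1
  rw [← map_col1Emb_univ, powersetCard_map, sum_map, smul_sum, smul_sum]
  refine Eq.trans ?_ (sum_attach _ _)
  refine sum_congr rfl fun A _ => ?_
  rw [hφ, tabSign_trans, sign_exchPerm, col2_exchPerm_trans, smul_smul]
  congr 1
  push_cast
  ring

end Tableaux

section TwoColumns

open Finset

variable {K : Type} [Field K] {μ : Fin 2 → ℕ} {r : ℕ}

theorem grSub_le_garnirSub (kk : ℕ → ℕ) : grSub K μ r kk ≤ garnirSub K μ r :=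
  Submodule.span_mono fun _ ⟨T, c, hc, hk, hx⟩ => ⟨T, c, hc, kk c, hk, hx⟩

theorem garnirSub_le_grSub [CharZero K] {k : ℕ} (hr : r = μ 0 + μ 1) (hk1 : 1 ≤ k)
    (hkb : k ≤ μ 1) (hka : k < μ 0) : garnirSub K μ r ≤ grSub K μ r fun _ => k := by
  refine Submodule.span_le.2 ?_
  rintro _ ⟨T₀, c, hc, l, hl, rfl⟩
  obtain rfl : c = 0 := by omega
  set N := grSub K μ r fun _ => k
  have hφ : ∀ T, N.mkQ (tabloid K μ r T) =
      ((tabSign T₀ T : ℤ) : K) • N.mkQ (setTabloid K T₀ (col2 T)) := fun T => by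
    rw [setTabloid_col2, ← map_smul, ← tabloid_eq_smul_signedTabloid]
  have hmap := map_garnirElt T₀ N.mkQ (fun Y => N.mkQ (setTabloid K T₀ Y)) hφ
  have hall := garnir_all_of_garnir (K := K) (fun Y => N.mkQ (setTabloid K T₀ Y))
    ((Fintype.card_fin r).trans hr) hk1 hkb hka (fun Y B hY hB hBk => by
      obtain ⟨T, rfl, rfl⟩ := exists_tab hr hkb hY hB hBk
      have h0 : N.mkQ (garnirElt K μ r T 0 hc k hkb) = 0 := by
        rw [Submodule.mkQ_apply, Submodule.Quotient.mk_eq_zero]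
        exact Submodule.subset_span ⟨T, 0, hc, hkb, rfl⟩
      rw [hmap, smul_eq_zero] at h0
      refine sub_eq_zero.1 (h0.resolve_left ?_)
      exact Int.cast_ne_zero.2 (Units.ne_zero _))
  rw [SetLike.mem_coe, ← Submodule.Quotient.mk_eq_zero, ← Submodule.mkQ_apply, hmap,
    ← hall l _ _ (card_col2 T₀) (top2_subset T₀ l) (card_top2 T₀ hl), sub_self, smul_zero]

theorem garnirSub_le_grSub_one (hμ : μ 1 = 1) : garnirSub K μ r ≤ grSub K μ r fun _ => 1 := by
  refine Submodule.span_le.2 ?_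
  rintro _ ⟨T, c, hc, l, hl, rfl⟩
  obtain rfl : c = 0 := by omega
  have hl' : l ≤ 1 := hl.trans hμ.le
  interval_cases l
  · rw [SetLike.mem_coe, ← Submodule.Quotient.mk_eq_zero, ← Submodule.mkQ_apply,
      map_garnirElt T (Submodule.mkQ _)
        (fun Y => Submodule.mkQ (grSub K μ r fun _ => 1) (setTabloid K T Y)) (fun T' => by
          rw [setTabloid_col2, ← map_smul, ← tabloid_eq_smul_signedTabloid])]
    simp [top2]
  · exact Submodule.subset_span ⟨T, 0, hc, hl, rfl⟩

theorem not_garnirSub_le_grSub {k : ℕ} (hr : r = μ 0 + μ 1) (h0 : μ 0 = k) (h1 : μ 1 = k)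
    (hk : 2 ≤ k) : ¬ garnirSub K μ r ≤ grSub K μ r fun _ => k := by
  intro hle
  obtain ⟨Y₀, -, hY₀⟩ := exists_subset_card_eq (s := (univ : Finset (Fin r))) (n := k)
    (by simp; omega)
  obtain ⟨T₀, hT₀, -⟩ := exists_tab (k := 0) hr (Nat.zero_le _) (hY₀.trans h1.symm)
    (empty_subset _) card_empty
  have hY₀c : Y₀ᶜ.card = k := by rw [card_compl, hY₀, Fintype.card_fin]; omega
  have hne : Y₀ ≠ Y₀ᶜ := fun h => by
    obtain ⟨y, hy⟩ := card_pos.1 (show 0 < Y₀.card by omega)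
    have hy' := hy
    rw [h] at hy'
    exact mem_compl.1 hy' hy
  let χ : Finset (Fin r) → K := fun Y =>
    (if Y = Y₀ then 1 else 0) + (-1 : K) ^ k * (if Y = Y₀ᶜ then 1 else 0)
  have hχ : ∀ Y, χ Y = (-1 : K) ^ k * χ Yᶜ := fun Y => by
    have e1 : (Yᶜ = Y₀) = (Y = Y₀ᶜ) := propext (by rw [compl_eq_comm, eq_comm])
    have e2 : (Yᶜ = Y₀ᶜ) = (Y = Y₀) := propext compl_inj_iff
    simp only [χ, e1, e2]
    rw [mul_add, ← mul_assoc, ← mul_pow]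
    simp [add_comm]
  have hmap := map_garnirElt T₀ (colFunctional T₀ χ) χ fun T => colFunctional_tabloid T₀ χ T
  have hzero : grSub K μ r (fun _ => k) ≤ LinearMap.ker (colFunctional T₀ χ) := by
    refine Submodule.span_le.2 ?_
    rintro _ ⟨T, c, hc, hk', rfl⟩
    obtain rfl : c = 0 := by omega
    have hYc : (col2 T)ᶜ.card = k := by
      rw [card_compl, card_col2, Fintype.card_fin]; omega
    have htop : top2 T k = col2 T :=
      eq_of_subset_of_card_le (top2_subset T k) (by rw [card_col2, card_top2 T hk', h1])
    have hps : powersetCard k (col2 T)ᶜ = {(col2 T)ᶜ} := by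
      rw [← hYc]; exact powersetCard_self _
    rw [SetLike.mem_coe, LinearMap.mem_ker, hmap, htop, hps, sum_singleton, sdiff_self,
      bot_eq_empty, empty_union, smul_eq_mul, smul_eq_mul, ← hχ, sub_self, mul_zero]
  have hc : 0 + 1 < 2 := by omega
  have hl : 1 ≤ μ ⟨0 + 1, hc⟩ := by
    change 1 ≤ μ 1
    omega
  have hmem := hzero (hle (Submodule.subset_span ⟨T₀, 0, hc, 1, hl, rfl⟩))
  rw [LinearMap.mem_ker, hmap, hT₀] at hmem
  have hsum : ∑ A ∈ powersetCard 1 Y₀ᶜ, χ ((Y₀ \ top2 T₀ 1) ∪ A) = 0 := by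
    refine sum_eq_zero fun A hA => ?_
    rw [mem_powersetCard] at hA
    obtain ⟨a, ha⟩ := card_eq_one.1 hA.2
    have haY : a ∉ Y₀ := mem_compl.1 (hA.1 (by simp [ha]))
    have htc : (Y₀ \ top2 T₀ 1).card = k - 1 := by
      rw [← hT₀, card_sdiff_of_subset (top2_subset T₀ 1), card_col2, card_top2 T₀ hl, h1]
    obtain ⟨y, hy⟩ := card_pos.1 (show 0 < (Y₀ \ top2 T₀ 1).card by omega)
    have n1 : (Y₀ \ top2 T₀ 1) ∪ A ≠ Y₀ := fun h => haY (h ▸ mem_union_right _ (by simp [ha]))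
    have n2 : (Y₀ \ top2 T₀ 1) ∪ A ≠ Y₀ᶜ := fun h =>
      mem_compl.1 (h ▸ mem_union_left A hy) (mem_sdiff.1 hy).1
    simp only [χ, if_neg n1, if_neg n2, mul_zero, add_zero]
  have hχ₀ : χ Y₀ = 1 := by simp [χ, hne]
  rw [hsum, hχ₀, smul_zero, sub_zero, smul_eq_mul, mul_one] at hmem
  rw [tabSign, Equiv.self_trans_symm] at hmem
  change ((Equiv.Perm.sign (1 : Equiv.Perm (Cell μ)) : ℤ) : K) = 0 at hmem
  simp at hmem

theorem eq_of_isQuotIso {G : Type} {M : Type} [AddCommGroup M] [Module K M]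
    [Module.Finite K M] {N₁ N₂ : Submodule K M} {ρ₁ ρ₂ : G → M →ₗ[K] M} (hle : N₁ ≤ N₂)
    (h : IsQuotIso K N₁ N₂ ρ₁ ρ₂) : N₁ = N₂ := by
  obtain ⟨e, -⟩ := h
  refine Submodule.eq_of_le_of_finrank_eq hle ?_
  have h1 := Submodule.finrank_quotient_add_finrank N₁
  have h2 := Submodule.finrank_quotient_add_finrank N₂
  have h3 := e.finrank_eq
  omega

theorem map_mem_garnirSub {ρ : Equiv.Perm (Fin r) → (MLam K μ r →ₗ[K] MLam K μ r)}
    (hρ : IsTabAction K μ r ρ) (σ : Equiv.Perm (Fin r)) {x : MLam K μ r}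
    (hx : x ∈ garnirSub K μ r) : ρ σ x ∈ garnirSub K μ r := by
  suffices h : garnirSub K μ r ≤ (garnirSub K μ r).comap (ρ σ) from h hx
  refine Submodule.span_le.2 ?_
  rintro _ ⟨T, c, hc, k, hk, rfl⟩
  refine Submodule.subset_span ⟨T.trans σ, c, hc, k, hk, ?_⟩
  unfold garnirElt
  rw [map_sub, map_sum, hρ σ T]
  congr 1
  exact sum_congr rfl fun A _ => by rw [hρ]; rfl

theorem isQuotIso_self {ρ : Equiv.Perm (Fin r) → (MLam K μ r →ₗ[K] MLam K μ r)}
    (hρ : IsTabAction K μ r ρ) :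
    IsQuotIso K (garnirSub K μ r) (garnirSub K μ r) ρ ρ := by
  refine ⟨LinearEquiv.refl _ _, fun σ x y h => ?_⟩
  rw [LinearEquiv.refl_apply, Submodule.Quotient.eq] at h ⊢
  rw [← map_sub]
  exact map_mem_garnirSub hρ σ h

end TwoColumns

/-- Theorem 6.4(1) of the paper: let `λ` be a partition of `r` with conjugate
`μ = (μ₁, μ₂)` (so `λ` has two columns of lengths `μ₁ ≥ μ₂`) and let `1 ≤ k ≤ μ₂`. Then
`M^λ / GR^λ(k) ≅ S^λ` as `𝔖_r`-modules iff `μ₁ > k`, or `μ₁ = μ₂ = k = 1`. -/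
theorem statement15 (K : Type) [Field K] [CharZero K] (μ₁ μ₂ k : ℕ)
    (hba : μ₂ ≤ μ₁) (hk1 : 1 ≤ k) (hkb : k ≤ μ₂) (r : ℕ) (hr : r = μ₁ + μ₂)
    (ρ : Equiv.Perm (Fin r) → (MLam K ![μ₁, μ₂] r →ₗ[K] MLam K ![μ₁, μ₂] r))
    (hρ : IsTabAction K ![μ₁, μ₂] r ρ) :
    IsQuotIso K (grSub K ![μ₁, μ₂] r (fun _ => k)) (garnirSub K ![μ₁, μ₂] r) ρ ρ ↔
      (k < μ₁ ∨ (μ₁ = 1 ∧ μ₂ = 1 ∧ k = 1)) := by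
  have hr' : r = ![μ₁, μ₂] 0 + ![μ₁, μ₂] 1 := hr
  constructor
  · intro h
    by_contra hcon
    have hkμ : μ₁ = k ∧ μ₂ = k ∧ 2 ≤ k := by omega
    refine not_garnirSub_le_grSub (K := K) hr' hkμ.1 hkμ.2.1 hkμ.2.2 ?_
    exact (eq_of_isQuotIso (grSub_le_garnirSub _) h).ge
  · intro h
    have heq : grSub K ![μ₁, μ₂] r (fun _ => k) = garnirSub K ![μ₁, μ₂] r := by
      refine le_antisymm (grSub_le_garnirSub _) ?_
      rcases h with h | ⟨-, h1, rfl⟩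
      · exact garnirSub_le_grSub hr' hk1 hkb h
      · exact garnirSub_le_grSub_one h1
    rw [heq]
    exact isQuotIso_self hρ

end Specht
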